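/- If G is a 2-connected graph of order n, then D(G) ≥ 2/5, i.e., the average size of a nonempty connected vertex set is at least 2n/5. -/

import Mathlib

open Finset Filter

attribute [local instance] Classical.propDecidable

noncomputable def connSets {V : Type*} [Fintype V] (G : SimpleGraph V) : Finset (Finset V) :=
  Finset.univ.filter fun U => U.Nonempty ∧ (G.induce (U : Set V)).Connected

def KConnected {V : Type*} [Fintype V] (k : ℕ) (G : SimpleGraph V) : Prop :=
  k < Fintype.card V ∧
    ∀ S : Finset V, S.card < k → (G.induce ((Sᶜ : Finset V) : Set V)).Connected

/-!
Let `G` be connected on `n` vertices, with `N` connected sets of total size `S`. Some vertex `v`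
lies in at least `S / n` of them. The connected sets through `v` have average size at least
`(n + 1) / 2`, and the others are the connected sets of `G - v`. If every `G - v` has density at
least `c ≤ 1 / 2`, this gives `G` density at least `c / (1 / 2 + c)`. As deleting a vertex from a
`(k + 1)`-connected graph leaves a `k`-connected one, the bound follows by induction on `k`: the
map `c ↦ c / (1 / 2 + c)` sends `2 ^ (k - 1) / (2 ^ k + 1)` to `2 ^ k / (2 ^ (k + 1) + 1)`.

For `k = 1` the density is at least `1 / 3`: a connected graph has a non-cut vertex `v` lying in at
least `2 N / (n + 1)` connected sets, so that induction on `n` applies to `G - v`. To find `v`, let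
`M` be the largest number of connected sets through a non-cut vertex, and delete non-cut vertices
one at a time to show `N ≤ (n + 1) / 2 * M`. A deleted vertex `v` shares with any other vertex at
least a fraction `1 / n` of the connected sets through `v`, so `M` decreases by that much as long as
the non-cut vertices of `G - v` are also non-cut in `G`. The only exception is a leaf `v` whose
neighbour is non-cut in `G - v`; it is remembered as part of a pendant path at this neighbour.
-/

section

variable {V : Type*} {G : SimpleGraph V} {A B C H K U W : Finset V} {u v w x y : V}

/-! ### Connected vertex sets -/

/-- The finite vertex set `U` is nonempty and induces a connected subgraph of `G`. -/
abbrev ConnectedOn (G : SimpleGraph V) (U : Finset V) : Prop :=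
  (G.induce (U : Set V)).Connected

namespace ConnectedOn

theorem finset_nonempty (hU : ConnectedOn G U) : U.Nonempty :=
  let ⟨x⟩ := hU.nonempty
  ⟨x.1, x.2⟩

theorem singleton (v : V) : ConnectedOn G {v} := by
  have : Subsingleton (({v} : Finset V) : Set V) := by simp
  have : Nonempty (({v} : Finset V) : Set V) := by simp
  exact ⟨.of_subsingleton⟩

theorem union (hA : ConnectedOn G A) (hB : ConnectedOn G B) (hAB : (A ∩ B).Nonempty) :
    ConnectedOn G (A ∪ B) := by
  rw [ConnectedOn, coe_union]
  exact SimpleGraph.induce_union_connected hA.preconnected hB.preconnected (by exact_mod_cast hAB)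

theorem union_of_adj (hA : ConnectedOn G A) (hB : ConnectedOn G B) (hy : y ∈ A) (hx : x ∈ B)
    (hyx : G.Adj y x) : ConnectedOn G (A ∪ B) := by
  rw [ConnectedOn, coe_union]
  exact SimpleGraph.connected_induce_union hA.preconnected hB.preconnected hy hx hyx

theorem insert_of_adj (hA : ConnectedOn G A) (hy : y ∈ A) (hyx : G.Adj y x) :
    ConnectedOn G (insert x A) := by
  rw [insert_eq]
  exact (singleton x).union_of_adj hA (mem_singleton_self x) hy hyx.symm

theorem exists_adj_of_ssubset (hW : ConnectedOn G W) (hH : H.Nonempty) (hHW : H ⊂ W) :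
    ∃ y ∈ H, ∃ x ∈ W, x ∉ H ∧ G.Adj y x := by
  obtain ⟨a, haH⟩ := hH
  obtain ⟨b, hbW, hbH⟩ := exists_of_ssubset hHW
  obtain ⟨p⟩ := hW.preconnected ⟨a, hHW.1 haH⟩ ⟨b, hbW⟩
  obtain ⟨d, -, hd₁, hd₂⟩ := p.exists_boundary_dart {z | z.1 ∈ H} haH hbH
  exact ⟨d.fst, hd₁, d.snd, d.snd.2, hd₂, d.adj⟩

theorem exists_adj (hW : ConnectedOn G W) (hv : v ∈ W) (hne : W ≠ {v}) :
    ∃ y ∈ W, G.Adj v y := by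
  obtain ⟨p, hp, q, hq, -, hpq⟩ := hW.exists_adj_of_ssubset (singleton_nonempty v)
    ((singleton_subset_iff.2 hv).ssubset_of_ne hne.symm)
  exact ⟨q, hq, mem_singleton.1 hp ▸ hpq⟩

theorem induction_insert {H : Finset V} {motive : Finset V → Prop} (hW : ConnectedOn G W)
    (self : motive W)
    (insert : ∀ ⦃H x y⦄, ConnectedOn G H → H ⊆ W → y ∈ H → x ∈ W → x ∉ H → G.Adj y x →
      motive (insert x H) → motive H)
    (hH : ConnectedOn G H) (hHW : H ⊆ W) : motive H := by
  rcases hHW.eq_or_ssubset with rfl | hss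
  · exact self
  · obtain ⟨y, hy, x, hx, hxH, hyx⟩ := hW.exists_adj_of_ssubset hH.finset_nonempty hss
    exact insert hH hHW hy hx hxH hyx
      (induction_insert hW self insert (hH.insert_of_adj hy hyx) (insert_subset hx hHW))
termination_by #(W \ H)
decreasing_by
  rw [sdiff_insert]
  exact card_erase_lt_of_mem (mem_sdiff.2 ⟨hx, hxH⟩)

theorem exists_erase (hW : ConnectedOn G W) (hH : ConnectedOn G H) (hHW : H ⊂ W) :
    ∃ v ∈ W, v ∉ H ∧ ConnectedOn G (W.erase v) := by
  refine induction_insert (motive := fun H ↦ H ≠ W → ∃ v ∈ W, v ∉ H ∧ ConnectedOn G (W.erase v))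
    hW (fun h ↦ absurd rfl h) ?_ hH hHW.1 hHW.ne
  intro H x y hH _ _ hx hxH _ ih _
  by_cases hins : insert x H = W
  · exact ⟨x, hx, hxH, by rwa [← hins, erase_insert hxH]⟩
  · obtain ⟨v, hv, hvH, hconn⟩ := ih hins
    exact ⟨v, hv, fun h ↦ hvH (mem_insert_of_mem h), hconn⟩

end ConnectedOn

/-- The vertex sets `U` with `H ⊆ U ⊆ W` that are connected in `G`. -/
noncomputable def connBetween (G : SimpleGraph V) (H W : Finset V) : Finset (Finset V) :=
  {U ∈ Icc H W | ConnectedOn G U}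

theorem mem_connBetween : U ∈ connBetween G H W ↔ H ⊆ U ∧ U ⊆ W ∧ ConnectedOn G U := by
  simp [connBetween, and_assoc]

theorem connSets_eq_connBetween [Fintype V] : connSets G = connBetween G ∅ univ := by
  ext U
  simp only [connSets, mem_filter, mem_univ, true_and, mem_connBetween, empty_subset,
    subset_univ, and_iff_right_iff_imp]
  exact ConnectedOn.finset_nonempty

theorem connBetween_self (hH : ConnectedOn G H) : connBetween G H H = {H} := by
  simp [connBetween, filter_singleton, hH]

theorem connBetween_empty_right : connBetween G H ∅ = ∅ :=
  eq_empty_of_forall_notMem fun U hU ↦ by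
    obtain ⟨-, hU, hconn⟩ := mem_connBetween.1 hU
    exact hconn.finset_nonempty.ne_empty (subset_empty.1 hU)

theorem connBetween_anti_left (hHK : H ⊆ K) : connBetween G K W ⊆ connBetween G H W := by
  intro U hU
  obtain ⟨hKU, hUW, hU⟩ := mem_connBetween.1 hU
  exact mem_connBetween.2 ⟨hHK.trans hKU, hUW, hU⟩

theorem sum_connBetween_eq_add {M : Type*} [AddCommMonoid M] (H W : Finset V) (v : V)
    (f : Finset V → M) :
    ∑ U ∈ connBetween G H W, f U =
      ∑ U ∈ connBetween G (insert v H) W, f U + ∑ U ∈ connBetween G H (W.erase v), f U := by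
  rw [← sum_filter_add_sum_filter_not (connBetween G H W) (v ∈ ·)]
  congr 2 <;> ext U <;>
    simp only [mem_filter, mem_connBetween, insert_subset_iff, subset_erase] <;> tauto

theorem card_connBetween_eq_add (H W : Finset V) (v : V) :
    #(connBetween G H W) =
      #(connBetween G (insert v H) W) + #(connBetween G H (W.erase v)) := by
  simpa only [card_eq_sum_ones] using sum_connBetween_eq_add H W v fun _ ↦ 1

theorem sum_card_connBetween_empty (G : SimpleGraph V) (W : Finset V) :
    ∑ U ∈ connBetween G ∅ W, #U = ∑ w ∈ W, #(connBetween G {w} W) := by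
  have h := sum_card_bipartiteAbove_eq_sum_card_bipartiteBelow (s := connBetween G ∅ W) (t := W)
    fun U w ↦ w ∈ U
  convert h using 2 with U hU w
  · have hUW := (mem_connBetween.1 hU).2.1
    rw [bipartiteAbove, filter_mem_eq_inter, inter_eq_right.2 hUW]
  · congr 1
    ext U
    simp [mem_bipartiteBelow, mem_connBetween, and_comm]

theorem card_add_one_le_card_add_card_connBetween (hH : ConnectedOn G H) (hW : ConnectedOn G W)
    (hHW : H ⊆ W) : #W + 1 ≤ #H + #(connBetween G H W) := by
  refine ConnectedOn.induction_insert (motive := fun H ↦ #W + 1 ≤ #H + #(connBetween G H W))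
    hW (by simp [connBetween_self hW]) ?_ hH hHW
  intro H x y hH hHW _ _ hxH _ ih
  have hpos : 0 < #(connBetween G H (W.erase x)) :=
    card_pos.2 ⟨H, mem_connBetween.2 ⟨subset_rfl, subset_erase.2 ⟨hHW, hxH⟩, hH⟩⟩
  rw [card_insert_of_notMem hxH] at ih
  have := card_connBetween_eq_add (G := G) H W x
  lia

theorem card_connBetween_mul_le (hAB : Disjoint A B) (hy : y ∈ H) (hx : x ∈ K)
    (hyx : G.Adj y x) :
    #(connBetween G H A) * #(connBetween G K B) ≤ #(connBetween G (H ∪ K) (A ∪ B)) := by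
  rw [← card_product]
  refine card_le_card_of_injOn (fun p ↦ p.1 ∪ p.2) ?_ ?_
  · rintro ⟨U, D⟩ hUD
    obtain ⟨⟨hHU, hUA, hU⟩, hKD, hDB, hD⟩ :=
      And.imp mem_connBetween.1 mem_connBetween.1 (mem_product.1 hUD)
    exact mem_connBetween.2 ⟨union_subset_union hHU hKD, union_subset_union hUA hDB,
      hU.union_of_adj hD (hHU hy) (hKD hx) hyx⟩
  · have inter_left : ∀ U ∈ connBetween G H A, ∀ D ∈ connBetween G K B, (U ∪ D) ∩ A = U := by
      intro U hU D hD
      have hDA := hAB.symm.mono_left (mem_connBetween.1 hD).2.1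
      rw [union_inter_distrib_right, inter_eq_left.2 (mem_connBetween.1 hU).2.1,
        disjoint_iff_inter_eq_empty.1 hDA, union_empty]
    have inter_right : ∀ U ∈ connBetween G H A, ∀ D ∈ connBetween G K B, (U ∪ D) ∩ B = D := by
      intro U hU D hD
      have hUB := hAB.mono_left (mem_connBetween.1 hU).2.1
      rw [union_inter_distrib_right, inter_eq_left.2 (mem_connBetween.1 hD).2.1,
        disjoint_iff_inter_eq_empty.1 hUB, empty_union]
    rintro ⟨U, D⟩ hUD ⟨U', D'⟩ hUD' (h : U ∪ D = U' ∪ D')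
    obtain ⟨hU, hD⟩ := mem_product.1 hUD
    obtain ⟨hU', hD'⟩ := mem_product.1 hUD'
    have hUU' : U = U' := by rw [← inter_left U hU D hD, h, inter_left U' hU' D' hD']
    have hDD' : D = D' := by rw [← inter_right U hU D hD, h, inter_right U' hU' D' hD']
    rw [hUU', hDD']

theorem exists_isGreatest_connBetween (hH : ConnectedOn G H) (hHW : H ⊆ W) :
    ∃ C, IsGreatest (connBetween G H W : Set (Finset V)) C := by
  obtain ⟨C, hC, hmax⟩ := exists_max_image (connBetween G H W) card
    ⟨H, mem_connBetween.2 ⟨subset_rfl, hHW, hH⟩⟩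
  refine ⟨C, hC, fun U hU ↦ ?_⟩
  obtain ⟨hHC, hCW, hCconn⟩ := mem_connBetween.1 hC
  obtain ⟨hHU, hUW, hUconn⟩ := mem_connBetween.1 hU
  have hCU : C ∪ U ∈ connBetween G H W := mem_connBetween.2
    ⟨hHC.trans subset_union_left, union_subset hCW hUW,
      hCconn.union hUconn (hH.finset_nonempty.mono (subset_inter hHC hHU))⟩
  rw [eq_of_subset_of_card_le subset_union_left (hmax _ hCU)]
  exact subset_union_right

theorem mem_of_isGreatest_connBetween (hC : IsGreatest (connBetween G H W : Set (Finset V)) C)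
    (hy : y ∈ C) (hx : x ∈ W) (hyx : G.Adj y x) : x ∈ C := by
  obtain ⟨hHC, hCW, hCconn⟩ := mem_connBetween.1 hC.1
  have hins : insert x C ∈ connBetween G H W := mem_connBetween.2
    ⟨hHC.trans (subset_insert x C), insert_subset hx hCW, hCconn.insert_of_adj hy hyx⟩
  exact hC.2 hins (mem_insert_self x C)

theorem ConnectedOn.sdiff_of_isGreatest (hW : ConnectedOn G W) (hx : x ∈ W)
    (hC : IsGreatest (connBetween G H (W.erase x) : Set (Finset V)) C) :
    ConnectedOn G (W \ C) := by
  obtain ⟨hCW, hxC⟩ := subset_erase.1 (mem_connBetween.1 hC.1).2.1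
  obtain ⟨D, hD⟩ := exists_isGreatest_connBetween (W := W \ C) (ConnectedOn.singleton (G := G) x)
    (singleton_subset_iff.2 (mem_sdiff.2 ⟨hx, hxC⟩))
  obtain ⟨hxD, hDW, hDconn⟩ := mem_connBetween.1 hD.1
  rw [singleton_subset_iff] at hxD
  suffices hunion : C ∪ D = W by
    rwa [← hunion, union_sdiff_cancel_left (disjoint_of_subset_right hDW disjoint_sdiff)]
  by_contra hne
  have hss : C ∪ D ⊂ W := (union_subset hCW (hDW.trans sdiff_subset)).ssubset_of_ne hne
  obtain ⟨p, hp, q, hqW, hq, hpq⟩ := hW.exists_adj_of_ssubset ⟨x, mem_union_right C hxD⟩ hss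
  obtain ⟨hqC, hqD⟩ := notMem_union.1 hq
  rcases mem_union.1 hp with hpC | hpD
  · have hqx : q ≠ x := fun h ↦ hqD (h ▸ hxD)
    exact hqC (mem_of_isGreatest_connBetween hC hpC (mem_erase.2 ⟨hqx, hqW⟩) hpq)
  · exact hqD (mem_of_isGreatest_connBetween hD hpD (mem_sdiff.2 ⟨hqW, hqC⟩) hpq)

theorem card_connBetween_mul_sub_le (hW : ConnectedOn G W) (hy : y ∈ H) (hx : x ∈ W)
    (hyx : G.Adj y x) (hC : IsGreatest (connBetween G H (W.erase x) : Set (Finset V)) C) :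
    #(connBetween G H C) * (#W - #C) ≤ #(connBetween G (insert x H) W) := by
  obtain ⟨hCW, hxC⟩ := subset_erase.1 (mem_connBetween.1 hC.1).2.1
  have hxR : x ∈ W \ C := mem_sdiff.2 ⟨hx, hxC⟩
  have hR : #W - #C ≤ #(connBetween G {x} (W \ C)) := by
    have := card_add_one_le_card_add_card_connBetween (ConnectedOn.singleton (G := G) x)
      (hW.sdiff_of_isGreatest hx hC) (singleton_subset_iff.2 hxR)
    rw [card_singleton, card_sdiff_of_subset hCW] at this
    lia
  calc #(connBetween G H C) * (#W - #C)
      ≤ #(connBetween G H C) * #(connBetween G {x} (W \ C)) := Nat.mul_le_mul_left _ hR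
    _ ≤ #(connBetween G (H ∪ {x}) (C ∪ W \ C)) :=
      card_connBetween_mul_le disjoint_sdiff hy (mem_singleton_self x) hyx
    _ = #(connBetween G (insert x H) W) := by
      rw [union_sdiff_of_subset hCW, union_comm, ← insert_eq]

theorem connBetween_eq_of_isGreatest (hC : IsGreatest (connBetween G H W : Set (Finset V)) C) :
    connBetween G H W = connBetween G H C := by
  have hCW := (mem_connBetween.1 hC.1).2.1
  ext U
  rw [mem_connBetween, mem_connBetween]
  exact ⟨fun hU ↦ ⟨hU.1, hC.2 (mem_connBetween.2 hU), hU.2.2⟩,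
    fun hU ↦ ⟨hU.1, hU.2.1.trans hCW, hU.2.2⟩⟩

/-! ### The average size above a connected core -/

theorem card_add_card_mul_card_connBetween_le {H W : Finset V} (hH : ConnectedOn G H)
    (hW : ConnectedOn G W) (hHW : H ⊆ W) :
    (#H + #W) * #(connBetween G H W) ≤ 2 * ∑ U ∈ connBetween G H W, #U := by
  rcases hHW.eq_or_ssubset with rfl | hss
  · simp [connBetween_self hH, two_mul]
  obtain ⟨y, hy, x, hx, hxH, hyx⟩ := hW.exists_adj_of_ssubset hH.finset_nonempty hss
  -- The sets avoiding `x` lie in `C`, so their average may fall short by `(#W - #C) / 2`, but each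
  -- extends through `x` to `#W - #C` sets whose average is better by `1 / 2`.
  obtain ⟨C, hC⟩ := exists_isGreatest_connBetween hH (subset_erase.2 ⟨hHW, hxH⟩)
  obtain ⟨hHC, hCW, hCconn⟩ := mem_connBetween.1 hC.1
  obtain ⟨hCW, hxC⟩ := subset_erase.1 hCW
  have hCW_card : #C < #W := card_lt_card (hCW.ssubset_of_mem_notMem hx hxC)
  have with_x := card_add_card_mul_card_connBetween_le (hH.insert_of_adj hy hyx) hW
    (insert_subset hx hHW)
  have without_x := card_add_card_mul_card_connBetween_le hH hCconn hHC
  have hcount := card_connBetween_mul_sub_le hW hy hx hyx hC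
  rw [card_insert_of_notMem hxH] at with_x
  rw [sum_connBetween_eq_add H W x, card_connBetween_eq_add H W x,
    connBetween_eq_of_isGreatest hC]
  zify [hCW_card.le] at with_x without_x hcount ⊢
  linarith
termination_by #W - #H
decreasing_by
  · rw [card_insert_of_notMem hxH]; have := card_lt_card hss; lia
  · have := card_le_card hHC; lia

theorem card_filter_disjoint_add_le (hu : u ∈ H) (hH : ConnectedOn G H) (hW : ConnectedOn G W)
    (hHW : H ⊆ W) :
    #{U ∈ connBetween G {v} W | Disjoint U H} + #H * #(connBetween G {u, v} W) ≤
      #W * #(connBetween G {u, v} W) := by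
  refine ConnectedOn.induction_insert
    (motive := fun H ↦ u ∈ H → #{U ∈ connBetween G {v} W | Disjoint U H} +
      #H * #(connBetween G {u, v} W) ≤ #W * #(connBetween G {u, v} W)) hW ?_ ?_ hH hHW hu
  · intro _
    have hnone : {U ∈ connBetween G {v} W | Disjoint U W} = ∅ := by
      refine filter_eq_empty_iff.2 fun U hU hdisj ↦ ?_
      obtain ⟨-, hUW, hconn⟩ := mem_connBetween.1 hU
      exact hconn.finset_nonempty.ne_empty (disjoint_self.1 (hdisj.mono_right hUW))
    rw [hnone, card_empty, zero_add]
  -- A set through `x` that misses `H` can be recovered from its union with `H`, a connected set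
  -- through both `u` and `v`.
  intro H x y hH hHW hy _ hxH hyx ih hu
  have hsplit : ({U ∈ connBetween G {v} W | Disjoint U H} : Finset (Finset V)) ⊆
      {U ∈ connBetween G {v} W | Disjoint U (insert x H)} ∪
        {U ∈ connBetween G {v} W | x ∈ U ∧ Disjoint U H} := by
    intro U
    simp only [mem_union, mem_filter, disjoint_insert_right]
    tauto
  have hfirst : #{U ∈ connBetween G {v} W | x ∈ U ∧ Disjoint U H} ≤
      #(connBetween G {u, v} W) := by
    refine card_le_card_of_injOn (· ∪ H) (fun U hU ↦ ?_) (fun U hU U' hU' hUU' ↦ ?_)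
    · obtain ⟨hU, hxU, -⟩ := mem_filter.1 hU
      obtain ⟨hvU, hUW, hconn⟩ := mem_connBetween.1 hU
      refine mem_connBetween.2 ⟨insert_subset (mem_union_right U hu)
        (hvU.trans subset_union_left), union_subset hUW hHW, ?_⟩
      exact hconn.union_of_adj hH hxU hy hyx.symm
    · rw [← union_sdiff_cancel_right (mem_filter.1 hU).2.2,
        ← union_sdiff_cancel_right (mem_filter.1 hU').2.2]
      exact congrArg (· \ H) hUU'
  have hcard := (card_le_card hsplit).trans (card_union_le _ _)
  have ih := ih (mem_insert_of_mem hu)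
  rw [card_insert_of_notMem hxH, add_one_mul] at ih
  lia

theorem card_connBetween_singleton_le_mul_pair (hW : ConnectedOn G W) (hu : u ∈ W) (v : V) :
    #(connBetween G {v} W) ≤ #W * #(connBetween G {u, v} W) := by
  have hdisj := card_filter_disjoint_add_le (v := v) (mem_singleton_self u)
    (ConnectedOn.singleton (G := G) u) hW (singleton_subset_iff.2 hu)
  have hthrough : #{U ∈ connBetween G {v} W | ¬ Disjoint U {u}} ≤
      #(connBetween G {u, v} W) := by
    refine card_le_card fun U hU ↦ ?_
    rw [mem_filter, disjoint_singleton_right, not_not, mem_connBetween] at hU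
    exact mem_connBetween.2 ⟨insert_subset hU.2 hU.1.1, hU.1.2⟩
  have hsplit := card_filter_add_card_filter_not (s := connBetween G {v} W) (Disjoint · {u})
  rw [card_singleton, one_mul] at hdisj
  lia

/-! ### Non-cut vertices and pendant paths -/

/-- `v` is a vertex of `W` whose removal leaves a connected set or, when `W = {v}`, nothing. -/
def NonCut (G : SimpleGraph V) (W : Finset V) (v : V) : Prop :=
  v ∈ W ∧ ((W.erase v).Nonempty → ConnectedOn G (W.erase v))

theorem ConnectedOn.exists_nonCut (hW : ConnectedOn G W) : ∃ v, NonCut G W v := by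
  obtain ⟨u, hu⟩ := hW.finset_nonempty
  rcases (singleton_subset_iff.2 hu).eq_or_ssubset with rfl | hss
  · exact ⟨u, hu, fun h ↦ by simp at h⟩
  · obtain ⟨v, hv, -, hconn⟩ := hW.exists_erase (.singleton u) hss
    exact ⟨v, hv, fun _ ↦ hconn⟩

theorem NonCut.of_erase (hw : NonCut G (W.erase v) w) (hv : v ∈ W) (hy : y ∈ W) (hyw : y ≠ w)
    (hyv : G.Adj y v) : NonCut G W w := by
  obtain ⟨hwv, hwW⟩ := mem_erase.1 hw.1
  have hyE : y ∈ (W.erase v).erase w := mem_erase.2 ⟨hyw, mem_erase.2 ⟨hyv.ne, hy⟩⟩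
  refine ⟨hwW, fun _ ↦ ?_⟩
  have := (hw.2 ⟨y, hyE⟩).insert_of_adj hyE hyv
  rwa [erase_right_comm, insert_erase (mem_erase.2 ⟨hwv.symm, hv⟩)] at this

theorem ConnectedOn.erase_of_leaf (hU : ConnectedOn G U) (hv : v ∈ U)
    (hleaf : ∀ y ∈ U, G.Adj v y → y = x) (hne : U ≠ {v}) :
    x ∈ U.erase v ∧ ConnectedOn G (U.erase v) := by
  have neighbor_mem : ∀ A ⊆ U, v ∈ A → ConnectedOn G A → A ≠ {v} → x ∈ A.erase v := by
    intro A hAU hvA hA hne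
    obtain ⟨y, hy, hvy⟩ := hA.exists_adj hvA hne
    rw [← hleaf y (hAU hy) hvy]
    exact mem_erase.2 ⟨hvy.ne', hy⟩
  have hx := neighbor_mem U subset_rfl hv hU hne
  obtain ⟨hxv, hxU⟩ := mem_erase.1 hx
  have hgreatest : IsGreatest (connBetween G {v} (U.erase x) : Set (Finset V)) {v} := by
    refine ⟨mem_connBetween.2 ⟨subset_rfl,
      singleton_subset_iff.2 (mem_erase.2 ⟨hxv.symm, hv⟩), .singleton v⟩, fun A hA ↦ ?_⟩
    obtain ⟨hvA, hAU, hA⟩ := mem_connBetween.1 hA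
    obtain ⟨hAU, hxA⟩ := subset_erase.1 hAU
    by_contra hAv
    have hmem := neighbor_mem A hAU (singleton_subset_iff.1 hvA) hA fun h ↦ hAv h.subset
    exact hxA (mem_of_mem_erase hmem)
  exact ⟨hx, sdiff_singleton_eq_erase v U ▸ hU.sdiff_of_isGreatest hxU hgreatest⟩

theorem connBetween_singleton_of_leaf (hv : v ∈ W) (hvx : G.Adj v x)
    (hleaf : ∀ y ∈ W, G.Adj v y → y = x) :
    connBetween G {v} W = insert {v} ((connBetween G {x} (W.erase v)).image (insert v)) := by
  ext U
  simp only [mem_insert, mem_image, mem_connBetween, singleton_subset_iff]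
  constructor
  · rintro ⟨hvU, hUW, hU⟩
    refine or_iff_not_imp_left.2 fun hne ↦ ⟨U.erase v, ?_, insert_erase hvU⟩
    obtain ⟨hx, hconn⟩ := hU.erase_of_leaf hvU (fun y hy ↦ hleaf y (hUW hy)) hne
    exact ⟨hx, erase_subset_erase v hUW, hconn⟩
  · rintro (rfl | ⟨D, ⟨hxD, hDW, hD⟩, rfl⟩)
    · exact ⟨mem_singleton_self v, singleton_subset_iff.2 hv, .singleton v⟩
    · exact ⟨mem_insert_self v D, insert_subset hv (hDW.trans (erase_subset v W)),
        hD.insert_of_adj hxD hvx.symm⟩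

theorem card_connBetween_singleton_of_leaf (hv : v ∈ W) (hvx : G.Adj v x)
    (hleaf : ∀ y ∈ W, G.Adj v y → y = x) :
    #(connBetween G {v} W) = #(connBetween G {x} (W.erase v)) + 1 := by
  have notMem : ∀ D ∈ connBetween G {x} (W.erase v), v ∉ D := fun D hD hvD ↦
    notMem_erase v W ((mem_connBetween.1 hD).2.1 hvD)
  rw [connBetween_singleton_of_leaf hv hvx hleaf, card_insert_of_notMem, card_image_of_injOn]
  · intro D hD D' hD' (h : insert v D = insert v D')
    rw [← erase_insert (notMem D hD), h, erase_insert (notMem D' hD')]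
  · intro hmem
    obtain ⟨D, hD, hDv⟩ := mem_image.1 hmem
    have hxD : x ∈ insert v D :=
      mem_insert_of_mem (singleton_subset_iff.1 (mem_connBetween.1 hD).1)
    exact hvx.ne' (mem_singleton.1 (hDv ▸ hxD))

theorem card_connBetween_pair_erase_le (hv : v ∈ W) (hvx : G.Adj v x) (w : V) :
    #(connBetween G {x, w} (W.erase v)) ≤ #(connBetween G {v, w} W) := by
  have hsingle : #(connBetween G {v} {v}) = 1 := by
    rw [connBetween_self (.singleton v), card_singleton]
  calc #(connBetween G {x, w} (W.erase v))
      = #(connBetween G {v} {v}) * #(connBetween G {x, w} (W.erase v)) := by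
        rw [hsingle, one_mul]
    _ ≤ #(connBetween G ({v} ∪ {x, w}) ({v} ∪ W.erase v)) :=
      card_connBetween_mul_le (disjoint_singleton_left.2 (notMem_erase v W))
        (mem_singleton_self v) (mem_insert_self x {w}) hvx
    _ ≤ #(connBetween G {v, w} W) := by
      rw [← insert_eq v (W.erase v), insert_erase hv]
      exact card_le_card (connBetween_anti_left (by grind))

/-- `M` bounds the number of connected sets through every non-cut vertex of the graph obtained from
the subgraph induced on `W` by attaching a pendant path with `L` new vertices at the non-cut vertex
`v`. The counts are expressed inside `W`: the free end of the path (`v` itself if `L = 0`) lies in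
`#(connBetween G {v} W) + L` connected sets, and a vertex `w ≠ v` of `W` lies in those of
`connBetween G {w} W` and, for each of these that contains `v`, in its `L` extensions into the
path. -/
structure IsPathBound (G : SimpleGraph V) (W : Finset V) (v : V) (L : ℕ) (M : ℝ) : Prop where
  nonCut : NonCut G W v
  card_end_le : (#(connBetween G {v} W) + L : ℝ) ≤ M
  card_le : ∀ w, NonCut G W w → w ≠ v →
    (#(connBetween G {w} W) + L * #(connBetween G {v, w} W) : ℝ) ≤ M

namespace IsPathBound

variable {L : ℕ} {M : ℝ}

theorem erase_of_leaf (h : IsPathBound G W v L M) (hx : NonCut G (W.erase v) x)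
    (hvx : G.Adj v x) (hleaf : ∀ y ∈ W, G.Adj v y → y = x) :
    IsPathBound G (W.erase v) x (L + 1) M where
  nonCut := hx
  card_end_le := by
    have hle := h.card_end_le
    rw [card_connBetween_singleton_of_leaf h.nonCut.1 hvx hleaf] at hle
    push_cast at hle ⊢
    linarith
  card_le w hw hwx := by
    have hwv : w ≠ v := ne_of_mem_erase hw.1
    have hle := h.card_le w
      (hw.of_erase h.nonCut.1 (mem_of_mem_erase hx.1) hwx.symm hvx.symm) hwv
    have hsplit := card_connBetween_eq_add (G := G) {w} W v
    have hpair := card_connBetween_pair_erase_le h.nonCut.1 hvx w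
    rify at hsplit hpair
    rw [hsplit] at hle
    push_cast
    nlinarith

theorem erase_of_forall_exists_adj (h : IsPathBound G W v L M) (hW : ConnectedOn G W)
    (hadj : ∀ w, NonCut G (W.erase v) w → ∃ y ∈ W, G.Adj v y ∧ y ≠ w)
    (hx : NonCut G (W.erase v) x) :
    IsPathBound G (W.erase v) x 0 (M - (L + 1) * #(connBetween G {v} W) / #W) := by
  have hbound : ∀ w, NonCut G (W.erase v) w →
      (#(connBetween G {w} (W.erase v)) : ℝ) ≤
        M - (L + 1) * #(connBetween G {v} W) / #W := by
    intro w hw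
    obtain ⟨hwv, hwW⟩ := mem_erase.1 hw.1
    obtain ⟨y, hy, hvy, hyw⟩ := hadj w hw
    have hle := h.card_le w (hw.of_erase h.nonCut.1 hy hyw hvy.symm) hwv
    have hsplit := card_connBetween_eq_add (G := G) {w} W v
    have hpair := card_connBetween_singleton_le_mul_pair hW hwW v
    rw [pair_comm] at hpair
    rify at hsplit hpair
    have hpos : (0 : ℝ) < #W := by exact_mod_cast hW.finset_nonempty.card_pos
    have hshare : (L + 1) * #(connBetween G {v} W) / #W ≤
        (L + 1 : ℝ) * #(connBetween G {v, w} W) := by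
      rw [div_le_iff₀ hpos, mul_assoc, mul_comm (#(connBetween G {v, w} W) : ℝ)]
      gcongr
    linarith
  exact ⟨hx, by simpa using hbound x hx, fun w hw _ ↦ by simpa using hbound w hw⟩

theorem card_connBetween_empty_singleton_le (h : IsPathBound G {v} v L M) :
    (#(connBetween G ∅ {v}) + L * #(connBetween G {v} {v}) + L * (L + 1) / 2 : ℝ) ≤
      (#{v} + L + 1) / 2 * M := by
  have hsplit := card_connBetween_eq_add (G := G) ∅ {v} v
  rw [erase_singleton, connBetween_empty_right, insert_empty_eq] at hsplit
  have hone : #(connBetween G {v} {v}) = 1 := by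
    rw [connBetween_self (.singleton v), card_singleton]
  have hend := h.card_end_le
  rw [hone] at hend
  rw [hsplit, hone]
  push_cast [card_empty, card_singleton] at hend ⊢
  nlinarith

theorem card_connBetween_empty_le {W : Finset V} {v : V} {L : ℕ} {M : ℝ}
    (h : IsPathBound G W v L M) (hW : ConnectedOn G W) :
    (#(connBetween G ∅ W) + L * #(connBetween G {v} W) + L * (L + 1) / 2 : ℝ) ≤
      (#W + L + 1) / 2 * M := by
  have hvW := h.nonCut.1
  obtain rfl | hne := eq_or_ne W {v}
  · exact h.card_connBetween_empty_singleton_le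
  have hsplit := card_connBetween_eq_add (G := G) ∅ W v
  have hcard := card_erase_add_one hvW
  rw [insert_empty_eq] at hsplit
  rify at hsplit hcard
  obtain ⟨y, hyW, hvy⟩ := hW.exists_adj hvW hne
  have hconn := h.nonCut.2 ⟨y, mem_erase.2 ⟨hvy.ne', hyW⟩⟩
  rw [hsplit, ← hcard]
  by_cases hleaf : ∃ x, NonCut G (W.erase v) x ∧ ∀ y ∈ W, G.Adj v y → y = x
  · obtain ⟨x, hx, hleaf⟩ := hleaf
    have hvx : G.Adj v x := hleaf y hyW hvy ▸ hvy
    have ih := (h.erase_of_leaf hx hvx hleaf).card_connBetween_empty_le hconn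
    rw [card_connBetween_singleton_of_leaf hvW hvx hleaf]
    push_cast at ih ⊢
    linarith
  · push Not at hleaf
    obtain ⟨x, hx⟩ := hconn.exists_nonCut
    have ih := (h.erase_of_forall_exists_adj hW hleaf hx).card_connBetween_empty_le hconn
    have hpos : (0 : ℝ) < #(W.erase v) + 1 := by positivity
    rw [← hcard] at ih
    push_cast at ih
    have hcancel : (#(W.erase v) + 0 + 1 : ℝ) / 2 *
          (M - (L + 1) * #(connBetween G {v} W) / (#(W.erase v) + 1)) =
        (#(W.erase v) + 1) / 2 * M - (L + 1) * #(connBetween G {v} W) / 2 := by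
      field_simp
      ring
    have hend := mul_le_mul_of_nonneg_left h.card_end_le (by positivity : (0 : ℝ) ≤ (L + 1) / 2)
    linarith
termination_by #W
decreasing_by all_goals exact card_erase_lt_of_mem hvW

end IsPathBound

/-! ### Density -/

theorem ConnectedOn.exists_nonCut_card_le (hW : ConnectedOn G W) :
    ∃ v, NonCut G W v ∧
      2 * #(connBetween G ∅ W) ≤ (#W + 1) * #(connBetween G {v} W) := by
  obtain ⟨u, hu⟩ := hW.exists_nonCut
  obtain ⟨v, hv, hmax⟩ := exists_max_image {w ∈ W | NonCut G W w}
    (fun w ↦ #(connBetween G {w} W)) ⟨u, mem_filter.2 ⟨hu.1, hu⟩⟩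
  have hv := (mem_filter.1 hv).2
  have hbound : IsPathBound G W v 0 #(connBetween G {v} W) :=
    ⟨hv, by simp, fun w hw _ ↦ by simpa using hmax w (mem_filter.2 ⟨hw.1, hw⟩)⟩
  refine ⟨v, hv, ?_⟩
  have hle := hbound.card_connBetween_empty_le hW
  rify
  push_cast at hle
  linarith

theorem ConnectedOn.card_add_two_mul_card_connBetween_le {W : Finset V} (hW : ConnectedOn G W) :
    (#W + 2) * #(connBetween G ∅ W) ≤ 3 * ∑ U ∈ connBetween G ∅ W, #U := by
  obtain ⟨v, hv, hcount⟩ := hW.exists_nonCut_card_le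
  have hcard := card_erase_add_one hv.1
  have with_v := card_add_card_mul_card_connBetween_le (.singleton v) hW
    (singleton_subset_iff.2 hv.1)
  have without_v : (#(W.erase v) + 2) * #(connBetween G ∅ (W.erase v)) ≤
      3 * ∑ U ∈ connBetween G ∅ (W.erase v), #U := by
    rcases (W.erase v).eq_empty_or_nonempty with hempty | hne
    · simp [hempty, connBetween_empty_right]
    · exact (hv.2 hne).card_add_two_mul_card_connBetween_le
  have hsplit := card_connBetween_eq_add (G := G) ∅ W v
  rw [sum_connBetween_eq_add ∅ W v]
  rw [card_singleton] at with_v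
  rw [insert_empty_eq] at hsplit ⊢
  zify at hcount hcard with_v without_v hsplit ⊢
  rw [← hcard] at hcount with_v ⊢
  rw [hsplit] at hcount ⊢
  linarith
termination_by #W
decreasing_by exact card_erase_lt_of_mem hv.1

theorem ConnectedOn.mul_card_connBetween_le_of_forall_erase (hW : ConnectedOn G W)
    (hcard : 2 ≤ #W) {c : ℝ} (hc : c ≤ 1 / 2)
    (herase : ∀ v ∈ W, c * #(W.erase v) * #(connBetween G ∅ (W.erase v)) ≤
      (∑ U ∈ connBetween G ∅ (W.erase v), #U : ℕ)) :
    c * #W * #(connBetween G ∅ W) ≤ (1 / 2 + c) * (∑ U ∈ connBetween G ∅ W, #U : ℕ) := by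
  obtain ⟨v, hv, hmax⟩ := exists_max_image W (fun w ↦ #(connBetween G {w} W))
    hW.finset_nonempty
  have hsum_le : ∑ U ∈ connBetween G ∅ W, #U ≤ #W * #(connBetween G {v} W) := by
    rw [sum_card_connBetween_empty, ← smul_eq_mul]
    exact sum_le_card_nsmul W _ _ hmax
  have with_v := card_add_card_mul_card_connBetween_le (.singleton v) hW
    (singleton_subset_iff.2 hv)
  have without_v := herase v hv
  have hsum := sum_connBetween_eq_add (G := G) ∅ W v card
  have hsplit := card_connBetween_eq_add (G := G) ∅ W v
  have hcard_erase := card_erase_add_one hv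
  rw [card_singleton] at with_v
  rw [insert_empty_eq] at hsplit hsum
  rify at with_v hcard hsum_le hsum hsplit hcard_erase without_v ⊢
  have hcoeff : 0 ≤ ((#W : ℝ) + 1) / 2 - c * #(W.erase v) := by nlinarith
  have hmul : (#W - 1 : ℝ) * (c * #W * #(connBetween G ∅ W)) ≤
      (#W - 1) * ((1 / 2 + c) * ∑ U ∈ connBetween G ∅ W, (#U : ℝ)) := by
    have with_v := mul_le_mul_of_nonneg_left with_v (Nat.cast_nonneg (α := ℝ) #W)
    have without_v := mul_le_mul_of_nonneg_left without_v (Nat.cast_nonneg (α := ℝ) #W)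
    have hsum_le := mul_le_mul_of_nonneg_left hsum_le hcoeff
    rw [hsum] at hsum_le ⊢
    rw [hsplit, ← hcard_erase]
    rw [← hcard_erase] at with_v without_v hsum_le
    linarith
  exact le_of_mul_le_mul_left hmul (by linarith)

/-- The density `2 ^ (k - 1) / (2 ^ k + 1)` guaranteed by `k`-connectivity, `k ≥ 1`. -/
noncomputable def densityBound (k : ℕ) : ℝ := 1 / 2 * (1 - 1 / (2 ^ k + 1))

theorem densityBound_le_half (k : ℕ) : densityBound k ≤ 1 / 2 := by
  have : (0 : ℝ) ≤ 1 / (2 ^ k + 1) := by positivity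
  unfold densityBound
  linarith

theorem densityBound_succ_mul (k : ℕ) :
    densityBound (k + 1) * (1 / 2 + densityBound k) = densityBound k := by
  have : (2 ^ k + 1 : ℝ) ≠ 0 := by positivity
  have : (2 ^ k * 2 + 1 : ℝ) ≠ 0 := by positivity
  rw [densityBound, densityBound, pow_succ]
  field_simp
  ring

theorem densityBound_nonneg (k : ℕ) : 0 ≤ densityBound k := by
  have : 1 / (2 ^ k + 1 : ℝ) ≤ 1 := div_le_one_of_le₀ (by simp) (by positivity)
  unfold densityBound
  linarith

theorem densityBound_mul_card_mul_card_connBetween_le {k : ℕ} (hk : 1 ≤ k) {W : Finset V}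
    (hW : ∀ S : Finset V, #S < k → ConnectedOn G (W \ S)) :
    densityBound k * #W * #(connBetween G ∅ W) ≤ (∑ U ∈ connBetween G ∅ W, #U : ℕ) := by
  have hconn : ConnectedOn G W := by simpa using hW ∅ (by rw [card_empty]; lia)
  induction k, hk using Nat.le_induction generalizing W with
  | base =>
    have hbase := hconn.card_add_two_mul_card_connBetween_le
    have hthird : densityBound 1 = 1 / 3 := by norm_num [densityBound]
    rify at hbase ⊢
    rw [hthird]
    linarith [Nat.cast_nonneg (α := ℝ) #(connBetween G ∅ W)]
  | succ k hk ih =>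
    have herase : ∀ v, ∀ S : Finset V, #S < k → ConnectedOn G (W.erase v \ S) := by
      intro v S hS
      rw [erase_sdiff_comm, ← sdiff_insert]
      exact hW (insert v S) ((card_insert_le v S).trans_lt (by lia))
    have herase_conn : ∀ v, ConnectedOn G (W.erase v) := fun v ↦ by
      simpa using herase v ∅ (by rw [card_empty]; lia)
    have hcard : 2 ≤ #W := by
      obtain ⟨v, hv⟩ := hconn.finset_nonempty
      have := card_pos.2 (herase_conn v).finset_nonempty
      have := card_erase_add_one hv
      lia
    have hstep := hconn.mul_card_connBetween_le_of_forall_erase hcard (densityBound_le_half k)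
      fun v _ ↦ ih (herase v) (herase_conn v)
    have hsucc := densityBound_succ_mul k
    have hpos := densityBound_nonneg k
    refine le_of_mul_le_mul_left ?_ (by linarith : 0 < 1 / 2 + densityBound k)
    linear_combination hstep + (#W : ℝ) * #(connBetween G ∅ W) * hsucc

theorem KConnected.connectedOn_univ_sdiff [Fintype V] {k : ℕ} (hG : KConnected k G)
    {S : Finset V} (hS : #S < k) : ConnectedOn G (univ \ S) := by
  rw [← compl_eq_univ_sdiff]
  exact hG.2 S hS

theorem KConnected.densityBound_mul_le [Fintype V] {k : ℕ} (hk : 1 ≤ k) (hG : KConnected k G) :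
    densityBound k * Fintype.card V * #(connSets G) ≤ ∑ U ∈ connSets G, (#U : ℝ) := by
  rw [connSets_eq_connBetween, ← card_univ]
  exact_mod_cast densityBound_mul_card_mul_card_connBetween_le hk
    fun S ↦ hG.connectedOn_univ_sdiff (S := S)

theorem KConnected.connSets_nonempty [Fintype V] {k : ℕ} (hk : 1 ≤ k) (hG : KConnected k G) :
    (connSets G).Nonempty := by
  have hconn := hG.connectedOn_univ_sdiff (S := ∅) (by rw [card_empty]; lia)
  rw [sdiff_empty] at hconn
  refine ⟨univ, ?_⟩
  rw [connSets_eq_connBetween, mem_connBetween]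
  exact ⟨empty_subset _, subset_rfl, hconn⟩

end

theorem stmt_14_general {V : Type*} [Fintype V] (G : SimpleGraph V) {k : ℕ} (hk : 1 ≤ k)
    (hG : KConnected k G) :
    (∑ U ∈ connSets G, (U.card : ℝ)) / ((Fintype.card V : ℝ) * (connSets G).card) ≥
      densityBound k ∧
    (∑ U ∈ connSets G, (U.card : ℝ)) / (connSets G).card ≥
      densityBound k * (Fintype.card V : ℝ) := by
  have hbound := hG.densityBound_mul_le hk
  have hn : (0 : ℝ) < Fintype.card V := by exact_mod_cast hG.1.pos
  have hN : (0 : ℝ) < #(connSets G) := by exact_mod_cast (hG.connSets_nonempty hk).card_pos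
  rw [ge_iff_le, ge_iff_le, le_div_iff₀ (mul_pos hn hN), le_div_iff₀ hN, ← mul_assoc]
  exact ⟨hbound, hbound⟩

theorem stmt_14 {V : Type*} [Fintype V] (G : SimpleGraph V) (hG : KConnected 2 G) :
    (∑ U ∈ connSets G, (U.card : ℝ)) / ((Fintype.card V : ℝ) * (connSets G).card) ≥ 2 / 5 ∧
    (∑ U ∈ connSets G, (U.card : ℝ)) / (connSets G).card ≥ 2 * (Fintype.card V : ℝ) / 5 := by
  have hconst : densityBound 2 = 2 / 5 := by norm_num [densityBound]
  simpa only [hconst, div_mul_eq_mul_div] using stmt_14_general G one_le_two hG
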